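/- Let m, m' be parameters, L ∈ P_cmpl and d ≥ 2 an integer with m(L,d) ≥ 1, and set m₁ = m − 1_{(L,d)} + 1_{(D(L),d−1)}. Then: (i) Λ(η,a;m₁,m') = Λ(η,a;m,m') for every pair (η,a) ≠ (L,d), and Λ(L,d;m₁,m') = Λ(L,d;m,m') − 1 (in particular Λ(η,a;m₁,m') ≤ Λ(η,a;m,m') for all (η,a)); (ii) Λ(η,a;m',m₁) = Λ(η,a;m',m) for every pair (η,a) ≠ (L,d−1), and Λ(L,d−1;m',m₁) = Λ(L,d−1;m',m) + 1. -/

import Mathlib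

/-!
The change in each term of the sum defining `Λ` telescopes along the orbit of `D`.  For
`η ∈ P_cmpl` put `g(k) = 1` if `D^k η = L` and `a + k = d`, and `g(k) = 0` otherwise.  Since `D` is
an involution, `D^k η = D L` and `a + k = d - 1` holds exactly when `g(k+1) = 1`, so the values of
`m₁` and `m` at `(D^k η, a + k)` differ by `g(k+1) - g(k)` (`shift_term`).  Summing over `k` leaves
only `-g(0)` (`finsum_telescope`), which is nonzero only at `(η, a) = (L, d)`.  In the second
argument of `Λ` the sign is opposite and `a` is replaced by `a + 1`.  For `η ∈ P_disc` nothing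
changes, because neither `L` nor `D L` lies in `P_disc`.
-/

open scoped Classical

/-- A parameter: a finitely supported multiplicity function on `P × ℤ_{>0}`,
encoded as a function on `P × ℕ` vanishing at index `0`. -/
structure Param (P : Type*) where
  m : P → ℕ → ℕ
  zero : ∀ η, m η 0 = 0
  finite : {p : P × ℕ | m p.1 p.2 ≠ 0}.Finite

/-- A parameter is generic if all multiplicities with `a ≥ 2` vanish. -/
def Param.Generic {P : Type*} (m : Param P) : Prop :=
  ∀ η a, 2 ≤ a → m.m η a = 0

/-- The alternating sum `Λ(η, a; m, m')`: for `η ∈ P_disc` it is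
`Σ_{k ≥ 0} (m(η, a+2k) - m'(η, a+2k+1))`, and for `η ∈ P_cmpl` (the complement)
it is `Σ_{k ≥ 0} (m(D^k η, a+k) - m'(D^k η, a+k+1))`. -/
noncomputable def Lam {P : Type*} (Pdisc : Set P) (D : P → P)
    (m m' : Param P) (η : P) (a : ℕ) : ℤ :=
  if η ∈ Pdisc then
    ∑ᶠ k : ℕ, ((m.m η (a + 2 * k) : ℤ) - (m'.m η (a + 2 * k + 1) : ℤ))
  else
    ∑ᶠ k : ℕ, ((m.m (D^[k] η) (a + k) : ℤ) - (m'.m (D^[k] η) (a + k + 1) : ℤ))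

/-- Parameters `m` and `m'` are relevant: there are finitely supported functions
`f_I, f_J, f_K` and a generic parameter `m₀` with `f_I + f_J + f_K = m`,
`f_K` vanishing on `P_disc`, and
`m'(η,a) = f_I(η,a-1) + f_J(η,a+1) + f_K(D η,a) + m₀(η,a)` for all `η` and `a ≥ 1`
(where `f_I(η,0)` is read as `0`). -/
def Relevant {P : Type*} (Pdisc : Set P) (D : P → P) (m m' : Param P) : Prop :=
  ∃ fI fJ fK m₀ : Param P, m₀.Generic ∧
    (∀ η a, fI.m η a + fJ.m η a + fK.m η a = m.m η a) ∧
    (∀ η ∈ Pdisc, ∀ a, fK.m η a = 0) ∧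
    (∀ η a, 1 ≤ a →
      m'.m η a = fI.m η (a - 1) + fJ.m η (a + 1) + fK.m (D η) a + m₀.m η a)


/-- Finite support bounds the second index uniformly in the first. -/
theorem Param.exists_bound {P : Type*} (m : Param P) :
    ∃ N, ∀ η a, N ≤ a → m.m η a = 0 := by
  obtain ⟨N, hN⟩ := (m.finite.image Prod.snd).bddAbove
  refine ⟨N + 1, fun η a ha => ?_⟩
  by_contra h
  have : a ≤ N := hN ⟨(η, a), h, rfl⟩
  omega

theorem finsum_eq_sum_range_of_bound (f : ℕ → ℤ) (N : ℕ) (hf : ∀ k, N ≤ k → f k = 0) :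
    ∑ᶠ k, f k = ∑ k ∈ Finset.range N, f k := by
  apply finsum_eq_sum_of_support_subset
  intro k hk
  simp only [Finset.coe_range, Set.mem_Iio]
  by_contra h
  exact hk (hf k (not_lt.mp h))

/-- Perturbing a finitely supported sum by a finitely supported discrete derivative `g(k+1) - g(k)`
changes its value by the single boundary term `-g(0)`. -/
theorem finsum_telescope (f f₁ g : ℕ → ℤ) (hf : ∃ N, ∀ k, N ≤ k → f k = 0)
    (hg : ∃ N, ∀ k, N ≤ k → g k = 0) (h : ∀ k, f₁ k = f k + (g (k + 1) - g k)) :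
    ∑ᶠ k, f₁ k = ∑ᶠ k, f k - g 0 := by
  obtain ⟨N, hN⟩ := hf
  obtain ⟨M, hM⟩ := hg
  rw [finsum_eq_sum_range_of_bound f (N + M) (fun k hk => hN k (by omega)),
    finsum_eq_sum_range_of_bound f₁ (N + M) (fun k hk => by
      rw [h, hN k (by omega), hM k (by omega), hM (k + 1) (by omega)]; rfl)]
  simp only [h]
  rw [Finset.sum_add_distrib, Finset.sum_range_sub, hM (N + M) (by omega)]
  ring

theorem Lam_terms_bound {P : Type*} (D : P → P) (m m' : Param P) (η : P) (a : ℕ) :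
    ∃ N, ∀ k, N ≤ k →
      ((m.m (D^[k] η) (a + k) : ℤ) - (m'.m (D^[k] η) (a + k + 1) : ℤ)) = 0 := by
  obtain ⟨N, hN⟩ := m.exists_bound
  obtain ⟨M, hM⟩ := m'.exists_bound
  refine ⟨N + M, fun k hk => ?_⟩
  rw [hN _ _ (by omega), hM _ _ (by omega)]
  rfl

/-- The indicator of the orbit `k ↦ (D^k η, b + k)` passing through `(L, d)` at time `k`. -/
noncomputable def orbitHit {P : Type*} (D : P → P) (L : P) (d : ℕ) (η : P) (b k : ℕ) : ℤ :=
  if D^[k] η = L ∧ b + k = d then 1 else 0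

theorem orbitHit_bound {P : Type*} (D : P → P) (L : P) (d : ℕ) (η : P) (b : ℕ) :
    ∃ N, ∀ k, N ≤ k → orbitHit D L d η b k = 0 :=
  ⟨d + 1, fun k hk => if_neg (by omega)⟩

/-- Moving one summand from `(L, d)` to `(D L, d - 1)` changes the multiplicities along an orbit by
a discrete derivative: the orbit meets `(D L, d - 1)` one step before it meets `(L, d)`. -/
theorem shift_term {P : Type*} (D : P → P) (hD : ∀ η, D (D η) = η)
    (m m₁ : Param P) (L : P) (d : ℕ) (hd : 2 ≤ d)
    (hm₁ : ∀ η a, (m₁.m η a : ℤ)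
      = (m.m η a : ℤ) - (if η = L ∧ a = d then 1 else 0)
        + (if η = D L ∧ a = d - 1 then 1 else 0)) (η : P) (b k : ℕ) :
    (m₁.m (D^[k] η) (b + k) : ℤ) = m.m (D^[k] η) (b + k)
      + (orbitHit D L d η b (k + 1) - orbitHit D L d η b k) := by
  have h : (D^[k] η = D L ∧ b + k = d - 1) ↔ (D^[k + 1] η = L ∧ b + (k + 1) = d) := by
    rw [Function.iterate_succ_apply']
    refine and_congr ⟨fun e => by rw [e, hD], fun e => by rw [← e, hD]⟩ (by omega)
  rw [hm₁]
  simp only [orbitHit, h]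
  ring

/-- The change of `Λ` under the shift, in either argument, at an arbitrary pair. -/
theorem Lam_shift {P : Type*} (Pdisc : Set P) (D : P → P)
    (hD2 : ∀ η ∉ Pdisc, D η ∉ Pdisc) (hD3 : ∀ η, D (D η) = η)
    (m m' m₁ : Param P) (L : P) (hL : L ∉ Pdisc) (d : ℕ) (hd : 2 ≤ d)
    (hm₁ : ∀ η a, (m₁.m η a : ℤ)
      = (m.m η a : ℤ) - (if η = L ∧ a = d then 1 else 0)
        + (if η = D L ∧ a = d - 1 then 1 else 0)) (η : P) (a : ℕ) :
    Lam Pdisc D m₁ m' η a = Lam Pdisc D m m' η a - (if η = L ∧ a = d then 1 else 0) ∧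
    Lam Pdisc D m' m₁ η a = Lam Pdisc D m' m η a + (if η = L ∧ a + 1 = d then 1 else 0) := by
  by_cases hη : η ∈ Pdisc
  · have h1 : η ≠ L := fun e => hL (e ▸ hη)
    have h2 : η ≠ D L := fun e => hD2 L hL (e ▸ hη)
    have h3 : ∀ b, (m₁.m η b : ℤ) = m.m η b := fun b => by simp [hm₁, h1, h2]
    simp [Lam, hη, h1, h3]
  · simp only [Lam, if_neg hη]
    constructor
    · rw [finsum_telescope _ _ (orbitHit D L d η a) (Lam_terms_bound D m m' η a)
        (orbitHit_bound D L d η a) (fun k => by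
          rw [shift_term D hD3 m m₁ L d hd hm₁ η a k]; ring)]
      simp [orbitHit]
    · rw [finsum_telescope _ _ (fun k => -orbitHit D L d η (a + 1) k)
        (Lam_terms_bound D m' m η a)
        ((orbitHit_bound D L d η (a + 1)).imp fun N h k hk => by simp [h k hk])
        (fun k => by
          have := shift_term D hD3 m m₁ L d hd hm₁ η (a + 1) k
          rw [add_right_comm a 1 k] at this
          rw [this]; ring)]
      simp [orbitHit]

/-- for `L ∈ P_cmpl`, `d ≥ 2`, `m(L,d) ≥ 1`, and
`m₁ = m - 1_{(L,d)} + 1_{(D L, d-1)}`: (i) `Λ(·;m₁,m')` equals `Λ(·;m,m')`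
away from `(L,d)` and drops by `1` there (in particular it never increases);
(ii) `Λ(·;m',m₁)` equals `Λ(·;m',m)` away from `(L,d-1)` and increases by `1`
there. -/
theorem lambda_shift_cmpl {P : Type*} (Pdisc : Set P) (D : P → P)
    (hD1 : ∀ η ∈ Pdisc, D η = η)
    (hD2 : ∀ η ∉ Pdisc, D η ∉ Pdisc)
    (hD3 : ∀ η, D (D η) = η)
    (m m' m₁ : Param P) (L : P) (hL : L ∉ Pdisc) (d : ℕ) (hd : 2 ≤ d)
    (hmLd : 1 ≤ m.m L d)
    (hm₁ : ∀ η a, (m₁.m η a : ℤ)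
      = (m.m η a : ℤ) - (if η = L ∧ a = d then 1 else 0)
        + (if η = D L ∧ a = d - 1 then 1 else 0)) :
    ((∀ (η : P) (a : ℕ), 1 ≤ a → (η, a) ≠ (L, d) →
        Lam Pdisc D m₁ m' η a = Lam Pdisc D m m' η a) ∧
      Lam Pdisc D m₁ m' L d = Lam Pdisc D m m' L d - 1 ∧
      (∀ (η : P) (a : ℕ), 1 ≤ a →
        Lam Pdisc D m₁ m' η a ≤ Lam Pdisc D m m' η a)) ∧
    ((∀ (η : P) (a : ℕ), 1 ≤ a → (η, a) ≠ (L, d - 1) →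
        Lam Pdisc D m' m₁ η a = Lam Pdisc D m' m η a) ∧
      Lam Pdisc D m' m₁ L (d - 1) = Lam Pdisc D m' m L (d - 1) + 1) := by
  have key := Lam_shift Pdisc D hD2 hD3 m m' m₁ L hL d hd hm₁
  refine ⟨⟨fun η a _ hne => ?_, ?_, fun η a _ => ?_⟩, fun η a _ hne => ?_, ?_⟩
  · rw [(key η a).1, if_neg (fun h => hne (Prod.ext h.1 h.2)), sub_zero]
  · rw [(key L d).1, if_pos ⟨rfl, rfl⟩]
  · rw [(key η a).1]
    split_ifs <;> omega
  · rw [(key η a).2, if_neg (fun h => hne (Prod.ext h.1 (by simp only; omega))), add_zero]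
  · rw [(key L (d - 1)).2, if_pos ⟨rfl, by omega⟩]
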